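/- Let K be a finite field with q elements whose characteristic divides neither k nor k+1 (k ≥ 1), and let s be the number of elements x ∈ K with x^(k+1) = x. Let r ≥ 1 and m₁, …, m_r be natural numbers, and let X be the r-branched star poset consisting of a minimum element x₀ together with r chains C₁, …, C_r, where C_t = {x₀ < z_{t,1} < z_{t,2} < ⋯ < z_{t,m_t}}, any two elements lying in distinct chains (other than x₀) being incomparable (so X_i ∩ X_j = {x₀} for i ≠ j). Then the number of elements f of the incidence algebra I(X, K) satisfying f^(k+1) = f equals N(m₁+1) · Π_{t=2}^{r} P(m_t), where N(m₁+1) is the number of (m₁+1)×(m₁+1) upper triangular matrices A over K with A^(k+1) = A, and for each m, P(m) = Σ_{(c₁,…,c_s)} (m! / (c₁!⋯c_s!)) · q^(Σ_{1 ≤ i < j ≤ s} c_i·c_j) · q^(c₂ + c₃ + ⋯ + c_s), the sum ranging over all tuples of natural numbers (c₁, …, c_s) with c₁ + ⋯ + c_s = m. -/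

import Mathlib

namespace IncidenceAlgebra

variable {K X : Type*} [Field K] [PartialOrder X]

/-- The values that an invertible element commuting with `diagonal d` can take at `(x, y)`. -/
def entrySet (d : X → K) (x y : X) : Set K :=
  {a | (x = y → a ≠ 0) ∧ (¬ x ≤ y → a = 0) ∧ (d x ≠ d y → a = 0)}

lemma card_entrySet_zero [DecidableEq K] [DecidableLT X] (d : X → K) (x y : X) :
    Nat.card (entrySet (0 : X → K) x y)
      = (if x < y ∧ d x ≠ d y then Nat.card K else 1) * Nat.card (entrySet d x y) := by
  by_cases hd : d x = d y
  · simp [entrySet, hd]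
  · have hxy : x ≠ y := fun h => hd (h ▸ rfl)
    have h1 : entrySet d x y = {0} := by ext a; simp [entrySet, hd, hxy]; tauto
    have h2 : x < y ↔ x ≤ y := ⟨le_of_lt, fun h => lt_of_le_of_ne h hxy⟩
    by_cases hle : x ≤ y
    · have h3 : entrySet (0 : X → K) x y = Set.univ := by ext a; simp [entrySet, hxy, hle]
      rw [h1, h3, if_pos ⟨h2.2 hle, hd⟩]
      simp
    · have h3 : entrySet (0 : X → K) x y = {0} := by ext a; simp [entrySet, hxy, hle]
      rw [h1, h3, if_neg (fun h => hle h.1.le)]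
      simp

lemma entrySet_nonempty (d : X → K) (x y : X) : (entrySet d x y).Nonempty := by
  by_cases h : x = y
  · exact ⟨1, by subst h; simp [entrySet]⟩
  · exact ⟨0, by simp [entrySet, h]⟩

variable [LocallyFiniteOrder X]

lemma eq_zero_of_mul_eq_zero [Finite X] {f g : IncidenceAlgebra K X} (hf : ∀ x, f x x ≠ 0)
    (h : f * g = 0) : g = 0 := by
  ext x y hxy
  induction x using WellFoundedGT.induction with
  | ind x ih =>
    have h' : (f * g) x y = 0 := by rw [h]; rfl
    rw [mul_apply, Finset.sum_eq_single x] at h'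
    · simpa [hf x] using h'
    · intro t ht hne
      obtain ⟨h1, h2⟩ := Finset.mem_Icc.1 ht
      simp [ih t (lt_of_le_of_ne h1 hne.symm) h2]
    · simp [hxy]

variable [DecidableEq X]

/-- The restriction of an element of the incidence algebra to the diagonal. -/
def diag : IncidenceAlgebra K X →+* (X → K) where
  toFun f x := f x x
  map_one' := by ext; simp
  map_mul' f g := by ext; simp
  map_zero' := rfl
  map_add' _ _ := rfl

@[simp] lemma diag_apply (f : IncidenceAlgebra K X) (x : X) : diag f x = f x x := rfl

/-- The diagonal element of the incidence algebra with given diagonal entries. -/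
def diagonal : (X → K) →+* IncidenceAlgebra K X where
  toFun d := ⟨fun x y => if x = y then d x else 0, fun _ _ h => if_neg fun e => h e.le⟩
  map_one' := by ext; simp
  map_mul' c d := by
    ext x y hxy
    by_cases h : x = y
    · subst h; simp
    · simp only [coe_mk, h, if_false, mul_apply]
      refine (Finset.sum_eq_zero fun t _ => ?_).symm
      by_cases hx : x = t
      · subst hx; simp [h]
      · simp [hx]
  map_zero' := by ext; simp
  map_add' c d := by ext x y; by_cases h : x = y <;> simp [h]

lemma diagonal_apply (d : X → K) (x y : X) :
    diagonal d x y = if x = y then d x else 0 := rfl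

@[simp] lemma diag_diagonal (d : X → K) : diag (diagonal d) = d := by
  ext; simp [diagonal_apply]

lemma diagonal_mul_apply (d : X → K) (f : IncidenceAlgebra K X) (x y : X) :
    (diagonal d * f) x y = d x * f x y := by
  by_cases h : x ≤ y <;> simp [diagonal_apply, h, apply_eq_zero_of_not_le]

lemma mul_diagonal_apply (d : X → K) (f : IncidenceAlgebra K X) (x y : X) :
    (f * diagonal d) x y = f x y * d y := by
  by_cases h : x ≤ y <;> simp [diagonal_apply, h, apply_eq_zero_of_not_le]

lemma commute_diagonal_iff (d : X → K) (f : IncidenceAlgebra K X) :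
    f * diagonal d = diagonal d * f ↔ ∀ x y, d x ≠ d y → f x y = 0 := by
  rw [← coe_inj, funext_iff]
  simp only [funext_iff, diagonal_mul_apply, mul_diagonal_apply]
  refine forall₂_congr fun x y => ?_
  rw [mul_comm, mul_eq_mul_right_iff]
  tauto

/-- An element `s` intertwining `diagonal d` and `f` up to the difference of their powers. -/
lemma exists_diagonal_mul_sub_mul_eq (f : IncidenceAlgebra K X) (n : ℕ) :
    ∃ s : IncidenceAlgebra K X,
      diagonal (diag f) * s - s * f = diagonal (diag f) ^ (n + 1) - f ^ (n + 1) ∧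
        ∀ x, s x x = (n + 1) * f x x ^ n := by
  induction n with
  | zero => exact ⟨1, by simp, by simp⟩
  | succ n ih =>
    obtain ⟨s, hs, hd⟩ := ih
    refine ⟨diagonal (diag f) * s + f ^ (n + 1), ?_, fun x => ?_⟩
    · have := congrArg (diagonal (diag f) * ·) hs
      simp only [mul_sub, ← mul_assoc, ← pow_succ'] at this
      rw [mul_add, add_mul, ← mul_assoc, ← pow_succ,
        add_sub_add_comm, this]
      abel
    · have := congrFun (map_pow diag f (n + 1)) x
      simp only [diag_apply, Pi.pow_apply] at this
      rw [add_apply, diagonal_mul_apply, hd, this, diag_apply]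
      push_cast
      ring

variable [Finite X] [Finite K]

instance : Finite (IncidenceAlgebra K X) :=
  Finite.of_injective (fun f => (f : X → X → K)) DFunLike.coe_injective

lemma isUnit_iff (f : IncidenceAlgebra K X) : IsUnit f ↔ ∀ x, f x x ≠ 0 := by
  constructor
  · intro h x
    exact ((h.map diag).map (Pi.evalRingHom (fun _ => K) x)).ne_zero
  · intro hf
    have hinj : Function.Injective (f * ·) := fun a b hab => by
      rw [← sub_eq_zero]
      exact eq_zero_of_mul_eq_zero hf (by rw [mul_sub, sub_eq_zero]; exact hab)
    obtain ⟨g, hg⟩ := (Finite.injective_iff_surjective.1 hinj) 1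
    have hg' : g * f = 1 := hinj (by
      change f * g = 1 at hg
      simp [← mul_assoc, hg])
    exact ⟨⟨f, g, hg, hg'⟩, rfl⟩

open MulAction in
lemma mem_orbit_diagonal_iff {k : ℕ} (hk : 1 ≤ k) (hk' : (k : K) ≠ 0) {d : X → K}
    (hd : d ^ (k + 1) = d) (f : IncidenceAlgebra K X) :
    f ∈ orbit (ConjAct (IncidenceAlgebra K X)ˣ) (diagonal d)
      ↔ f ^ (k + 1) = f ∧ diag f = d := by
  constructor
  · rintro ⟨g, rfl⟩
    refine ⟨?_, ?_⟩
    · change (g • diagonal d) ^ (k + 1) = g • diagonal d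
      rw [← smul_pow', ← map_pow, hd]
    · change diag (g • diagonal d) = d
      rw [ConjAct.units_smul_def, map_mul, map_mul, mul_right_comm, ← map_mul]
      simp
  · rintro ⟨hf, rfl⟩
    obtain ⟨s, hs, hsd⟩ := exists_diagonal_mul_sub_mul_eq f k
    rw [hf, ← map_pow, hd] at hs
    have hw : IsUnit (s - 1) := by
      rw [isUnit_iff]
      intro x
      have hx : f x x ^ (k + 1) = f x x := congrFun hd x
      rw [sub_apply, hsd, one_apply, if_pos rfl]
      by_cases h0 : f x x = 0
      · simp [h0, Nat.one_le_iff_ne_zero.1 hk]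
      · have : f x x ^ k = 1 := mul_right_cancel₀ h0 (by rw [← pow_succ, hx, one_mul])
        simpa [this] using hk'
    obtain ⟨u, hu⟩ := hw
    refine ⟨ConjAct.toConjAct u⁻¹, ?_⟩
    change ConjAct.toConjAct u⁻¹ • diagonal (diag f) = f
    rw [ConjAct.units_smul_def, ConjAct.ofConjAct_toConjAct, inv_inv, mul_assoc,
      Units.inv_mul_eq_iff_eq_mul, hu, mul_sub, sub_mul, one_mul, mul_one]
    rw [sub_eq_sub_iff_add_eq_add] at hs ⊢
    rw [hs, add_comm]

/-- Invertible elements commuting with `diagonal d`, described entrywise. -/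
noncomputable def unitsCommuteEquiv (d : X → K) :
    {u : (IncidenceAlgebra K X)ˣ // (u : IncidenceAlgebra K X) * diagonal d = diagonal d * u} ≃
      ((x y : X) → entrySet d x y) where
  toFun u x y := ⟨(u.1 : IncidenceAlgebra K X) x y,
    fun h => h ▸ (isUnit_iff _).1 u.1.isUnit x, fun h => apply_eq_zero_of_not_le h _,
    (commute_diagonal_iff d _).1 u.2 x y⟩
  invFun a :=
    have hu : IsUnit (⟨fun x y => a x y, fun x y h => (a x y).2.2.1 h⟩ : IncidenceAlgebra K X) :=
      (isUnit_iff _).2 fun x => (a x x).2.1 rfl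
    ⟨hu.unit, (commute_diagonal_iff d _).2 fun x y => (a x y).2.2.2⟩
  left_inv _ := Subtype.ext (Units.ext rfl)
  right_inv _ := rfl

lemma card_units_commute [Fintype X] (d : X → K) :
    Nat.card {u : (IncidenceAlgebra K X)ˣ //
      (u : IncidenceAlgebra K X) * diagonal d = diagonal d * u}
      = ∏ x, ∏ y, Nat.card (entrySet d x y) := by
  rw [Nat.card_congr (unitsCommuteEquiv d), Nat.card_pi]
  simp_rw [Nat.card_pi]

open MulAction in
lemma card_stabilizer_diagonal [Fintype X] (d : X → K) :
    Nat.card (stabilizer (ConjAct (IncidenceAlgebra K X)ˣ) (diagonal d))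
      = ∏ x, ∏ y, Nat.card (entrySet d x y) := by
  rw [← card_units_commute]
  refine Nat.card_congr (ConjAct.ofConjAct.toEquiv.subtypeEquiv fun g => ?_)
  rw [mem_stabilizer_iff, ConjAct.units_smul_def, Units.mul_inv_eq_iff_eq_mul]
  rfl

open MulAction in
lemma card_orbit_diagonal [Fintype X] [DecidableEq K] [DecidableLT X] (d : X → K) :
    Nat.card (orbit (ConjAct (IncidenceAlgebra K X)ˣ) (diagonal d))
      = ∏ x, ∏ y, if x < y ∧ d x ≠ d y then Nat.card K else 1 := by
  have h := Nat.card_congr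
    (orbitProdStabilizerEquivGroup (ConjAct (IncidenceAlgebra K X)ˣ) (diagonal d))
  have h0 : Nat.card (ConjAct (IncidenceAlgebra K X)ˣ)
      = ∏ x : X, ∏ y : X, Nat.card (entrySet (0 : X → K) x y) := by
    rw [← card_stabilizer_diagonal]
    exact Nat.card_congr (Equiv.subtypeUnivEquiv fun g => by simp).symm
  rw [Nat.card_prod, h0, card_stabilizer_diagonal] at h
  simp_rw [card_entrySet_zero d, Finset.prod_mul_distrib] at h
  refine Nat.eq_of_mul_eq_mul_right ?_ h
  refine Finset.prod_pos fun x _ => Finset.prod_pos fun y _ => ?_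
  have := (entrySet_nonempty d x y).to_subtype
  exact Nat.card_pos

/-- The number of `(k + 1)`-potent elements of the incidence algebra of a finite poset, as a sum
over the possible diagonals. -/
theorem card_potent [Fintype X] [Fintype K] [DecidableEq K] [DecidableLT X] {k : ℕ} (hk : 1 ≤ k)
    (hk' : (k : K) ≠ 0) :
    Nat.card {f : IncidenceAlgebra K X // f ^ (k + 1) = f}
      = ∑ d : X → {a : K // a ^ (k + 1) = a},
          ∏ x, ∏ y, if x < y ∧ d x ≠ d y then Nat.card K else 1 := by
  let φ : {f : IncidenceAlgebra K X // f ^ (k + 1) = f} → X → {a : K // a ^ (k + 1) = a} :=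
    fun f x => ⟨diag f.1 x, by rw [← Pi.pow_apply, ← map_pow, f.2]⟩
  rw [← Nat.card_congr (Equiv.sigmaFiberEquiv φ), Nat.card_sigma]
  refine Finset.sum_congr rfl fun d _ => ?_
  have hd : (fun x => (d x : K)) ^ (k + 1) = fun x => (d x : K) := funext fun x => (d x).2
  have h := card_orbit_diagonal (fun x => (d x : K))
  simp only [ne_eq, Subtype.coe_inj] at h
  rw [← h]
  have hφ (f : {f : IncidenceAlgebra K X // f ^ (k + 1) = f}) :
      φ f = d ↔ diag f.1 = fun x => (d x : K) := by
    simp only [funext_iff, Subtype.ext_iff, φ]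
  refine Nat.card_congr
    { toFun := fun f => ⟨f.1.1, (mem_orbit_diagonal_iff hk hk' hd _).2 ⟨f.1.2, (hφ _).1 f.2⟩⟩
      invFun := fun f => ⟨⟨f.1, ((mem_orbit_diagonal_iff hk hk' hd _).1 f.2).1⟩,
        (hφ _).2 ((mem_orbit_diagonal_iff hk hk' hd _).1 f.2).2⟩
      left_inv := fun _ => rfl
      right_inv := fun _ => rfl }

end IncidenceAlgebra

section Counting

/-- The contribution of a chain coloured by `e` sitting above an element of colour `a`. -/
def chainWeight {S : Type*} [DecidableEq S] (q : ℕ) {n : ℕ} (a : S) (e : Fin n → S) : ℕ :=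
  (∏ i, if a ≠ e i then q else 1) * ∏ i, ∏ j, if i < j ∧ e i ≠ e j then q else 1

/-- The number of words with prescribed letter multiplicities is a multinomial coefficient. -/
lemma card_filter_fiber_card_eq {s n : ℕ} (v : Fin s → ℕ) (hv : ∑ a, v a = n) :
    (Finset.univ.filter fun e : Fin n → Fin s =>
      (fun a => (Finset.univ.filter fun i => e i = a).card) = v).card
      = Nat.multinomial Finset.univ v := by
  classical
  have hexp (e : Fin n → Fin s) : (∏ i, MvPolynomial.X (R := ℕ) (e i))
      = MvPolynomial.monomial (Finsupp.equivFunOnFinite.symm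
          fun a => (Finset.univ.filter fun i => e i = a).card) 1 := by
    rw [MvPolynomial.monomial_eq, map_one, one_mul,
      Finsupp.prod_fintype _ _ fun _ => pow_zero _,
      ← Finset.prod_fiberwise_of_maps_to (t := Finset.univ) (g := e) fun _ _ => Finset.mem_univ _]
    refine Finset.prod_congr rfl fun a _ => ?_
    rw [Finset.prod_congr rfl (g := fun _ => MvPolynomial.X a)
      fun i hi => by rw [(Finset.mem_filter.1 hi).2]]
    simp
  have h1 := Finset.sum_pow_eq_sum_piAntidiag (Finset.univ : Finset (Fin s))
    (fun a => MvPolynomial.X (R := ℕ) a) n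
  have h2 : (∑ a : Fin s, MvPolynomial.X (R := ℕ) a) ^ n
      = ∑ e : Fin n → Fin s, ∏ i, MvPolynomial.X (R := ℕ) (e i) := by
    rw [← Fin.prod_const, Finset.prod_univ_sum]
    simp
  rw [h2] at h1
  have h3 := congrArg (MvPolynomial.coeff (Finsupp.equivFunOnFinite.symm v)) h1
  have hmon (w : Fin s → ℕ) : (∏ a, MvPolynomial.X (R := ℕ) a ^ w a)
      = MvPolynomial.monomial (Finsupp.equivFunOnFinite.symm w) 1 := by
    rw [MvPolynomial.monomial_eq, map_one, one_mul,
      Finsupp.prod_fintype _ _ fun _ => pow_zero _]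
    rfl
  simp_rw [hexp, hmon, MvPolynomial.coeff_sum, ← nsmul_eq_mul, MvPolynomial.coeff_smul,
    MvPolynomial.coeff_monomial, Equiv.apply_eq_iff_eq] at h3
  rw [Finset.card_filter, h3, Finset.sum_eq_single v]
  · simp
  · intro w _ hw; simp [hw]
  · intro h; simp [hv] at h

/-- The number of increasing pairs of positions with distinct letters only depends on the letter
multiplicities. -/
lemma card_lt_and_ne {s n : ℕ} (e : Fin n → Fin s) :
    (Finset.univ.filter fun p : Fin n × Fin n => p.1 < p.2 ∧ e p.1 ≠ e p.2).card
      = ∑ a, ∑ b ∈ Finset.Ioi a, (Finset.univ.filter fun i => e i = a).card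
          * (Finset.univ.filter fun i => e i = b).card := by
  have h : (Finset.univ.filter fun p : Fin n × Fin n => p.1 < p.2 ∧ e p.1 ≠ e p.2).card
      = (Finset.univ.filter fun p : Fin n × Fin n => e p.1 < e p.2).card := by
    refine Finset.card_nbij' (fun p => if e p.1 < e p.2 then p else p.swap)
      (fun p => if p.1 < p.2 then p else p.swap) ?_ ?_ ?_ ?_ <;>
    · rintro ⟨i, j⟩ h
      simp only [Finset.coe_filter, Set.mem_ofPred_eq, Finset.mem_univ, true_and] at h ⊢
      split_ifs with h' <;> grind
  rw [h, Finset.sum_sigma', Finset.card_eq_sum_card_fiberwise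
    (f := fun p : Fin n × Fin n => (⟨e p.1, e p.2⟩ : Σ _ : Fin s, Fin s))
    (t := Finset.univ.sigma fun a => Finset.Ioi a)]
  · refine Finset.sum_congr rfl fun c hc => ?_
    rw [← Finset.card_product]
    congr 1
    ext p
    have hc' : c.1 < c.2 := by simpa using hc
    obtain ⟨a, b⟩ := c
    simp only [Finset.mem_filter, Finset.mem_univ, true_and, Finset.mem_product, Sigma.mk.injEq,
      heq_eq_eq]
    grind
  · rintro ⟨i, j⟩ h
    simpa using h

lemma chainWeight_eq {s n : ℕ} (q : ℕ) (a : Fin s) (e : Fin n → Fin s) :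
    chainWeight q a e
      = q ^ (∑ b, ∑ c ∈ Finset.Ioi b, (Finset.univ.filter fun i => e i = b).card
          * (Finset.univ.filter fun i => e i = c).card) *
        q ^ (∑ b ∈ Finset.univ.filter (fun b => b ≠ a),
          (Finset.univ.filter fun i => e i = b).card) := by
  rw [chainWeight, mul_comm]
  congr 1
  · rw [← card_lt_and_ne, ← Finset.prod_product', Finset.prod_ite]
    simp
  · rw [Finset.prod_ite, Finset.prod_const_one, mul_one, Finset.prod_const,
      Finset.card_eq_sum_card_fiberwise (f := e) (t := Finset.univ.filter (fun b => b ≠ a))]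
    · congr 1
      refine Finset.sum_congr rfl fun b hb => ?_
      congr 1
      ext i
      simp only [Finset.mem_filter, Finset.mem_univ, true_and] at hb ⊢
      grind
    · intro i hi
      simpa [eq_comm] using hi

lemma sum_chainWeight {s : ℕ} (n q : ℕ) (a : Fin s) :
    ∑ e : Fin n → Fin s, chainWeight q a e
      = ∑ v ∈ Finset.Nat.antidiagonalTuple s n, Nat.multinomial Finset.univ v *
          q ^ (∑ i : Fin s, ∑ j ∈ Finset.Ioi i, v i * v j) *
          q ^ (∑ j ∈ Finset.univ.filter (fun j : Fin s => j ≠ a), v j) := by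
  simp_rw [chainWeight_eq]
  rw [← Finset.sum_fiberwise_of_maps_to (t := Finset.Nat.antidiagonalTuple s n)
    (g := fun (e : Fin n → Fin s) b => (Finset.univ.filter fun i => e i = b).card)]
  · refine Finset.sum_congr rfl fun v hv => ?_
    rw [← card_filter_fiber_card_eq v (Finset.Nat.mem_antidiagonalTuple.1 hv), mul_assoc,
      ← smul_eq_mul, ← Finset.sum_const]
    refine Finset.sum_congr rfl fun e he => ?_
    rw [← (Finset.mem_filter.1 he).2]
  · intro e _
    rw [Finset.Nat.mem_antidiagonalTuple,
      ← Finset.card_eq_sum_card_fiberwise (f := e) (by simp)]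
    simp

lemma sum_chainWeight_equiv {S T : Type*} [Fintype S] [DecidableEq S] [Fintype T] [DecidableEq T]
    (σ : S ≃ T) (n q : ℕ) (a : S) :
    ∑ e : Fin n → S, chainWeight q a e = ∑ e : Fin n → T, chainWeight q (σ a) e := by
  refine Fintype.sum_equiv ((Equiv.refl _).arrowCongr σ) _ _ fun e => ?_
  simp [chainWeight]

/-- The weighted number of colourings of a chain does not depend on the base colour. -/
lemma sum_chainWeight_of_card {S : Type*} [Fintype S] [DecidableEq S] {s : ℕ}
    (hS : Fintype.card S = s) (n q : ℕ) (a : S) (b : Fin s) :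
    ∑ e : Fin n → S, chainWeight q a e
      = ∑ v ∈ Finset.Nat.antidiagonalTuple s n, Nat.multinomial Finset.univ v *
          q ^ (∑ i : Fin s, ∑ j ∈ Finset.Ioi i, v i * v j) *
          q ^ (∑ j ∈ Finset.univ.filter (fun j : Fin s => j ≠ b), v j) := by
  let σ := Fintype.equivFinOfCardEq hS
  rw [sum_chainWeight_equiv (σ.trans (Equiv.swap (σ a) b)), ← sum_chainWeight]
  simp

end Counting

section Star

variable {X : Type*} [Fintype X] [PartialOrder X] [DecidableEq X] [DecidableLT X]
  {r : ℕ} {m : Fin r → ℕ} {x₀ : X} {z : (t : Fin r) → Fin (m t) → X}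

/-- Weighted colourings of a star poset decompose along its branches. -/
lemma sum_prod_star (hbot : ∀ w : X, x₀ ≤ w) (hchain : ∀ t i j, z t i ≤ z t j ↔ i ≤ j)
    (hsep : ∀ t t' i j, t ≠ t' → ¬ z t i ≤ z t' j) (htop : ∀ t i, ¬ z t i ≤ x₀)
    (hcover : ∀ w : X, w = x₀ ∨ ∃ t i, w = z t i) {S : Type*} [Fintype S] [DecidableEq S]
    (q : ℕ) :
    (∑ d : X → S, ∏ x, ∏ y, if x < y ∧ d x ≠ d y then q else 1)
      = ∑ a : S, ∏ t, ∑ e : Fin (m t) → S, chainWeight q a e := by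
  let g : Option (Σ t, Fin (m t)) → X := fun o => o.elim x₀ fun p => z p.1 p.2
  have hg : Function.Bijective g := by
    constructor
    · rintro (_ | ⟨t, i⟩) (_ | ⟨t', j⟩) h
      · rfl
      · exact absurd (h.symm.le) (htop t' j)
      · exact absurd h.le (htop t i)
      · have h' : z t i = z t' j := h
        by_cases ht : t = t'
        · subst ht
          rw [le_antisymm ((hchain t i j).1 h'.le) ((hchain t j i).1 h'.ge)]
        · exact absurd h'.le (hsep t t' i j ht)
    · intro w
      obtain rfl | ⟨t, i, rfl⟩ := hcover w
      · exact ⟨none, rfl⟩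
      · exact ⟨some ⟨t, i⟩, rfl⟩
  let φ := Equiv.ofBijective g hg
  have h0 (t i) : x₀ < z t i := lt_of_le_not_ge (hbot _) (htop t i)
  have h0' (t i) : ¬ z t i < x₀ := fun h => htop t i h.le
  have hlt (t i j) : z t i < z t j ↔ i < j := by simp only [lt_iff_le_not_ge, hchain]
  let ψ : (X → S) ≃ S × ((t : Fin r) → Fin (m t) → S) :=
    (φ.symm.arrowCongr (Equiv.refl S)).trans <|
      (Equiv.piOptionEquivProd (β := fun _ => S)).trans <|
        (Equiv.refl S).prodCongr (Equiv.piCurry fun _ _ => S)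
  simp_rw [Finset.prod_univ_sum, Fintype.piFinset_univ]
  rw [← Fintype.sum_prod_type']
  refine Fintype.sum_equiv ψ _ _ fun d => ?_
  have hψ1 : (ψ d).1 = d x₀ := rfl
  have hψ2 (t) : (ψ d).2 t = fun i => d (z t i) := rfl
  simp_rw [← Equiv.prod_comp φ, Fintype.prod_option, Fintype.prod_sigma]
  have e1 : φ none = x₀ := rfl
  have e2 (t i) : φ (some ⟨t, i⟩) = z t i := rfl
  simp only [e1, e2, hψ1, hψ2, chainWeight, h0, h0', lt_irrefl, false_and, true_and, if_false,
    one_mul]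
  rw [← Finset.prod_mul_distrib]
  refine Finset.prod_congr rfl fun t _ => ?_
  congr 1
  refine Finset.prod_congr rfl fun i _ => ?_
  rw [Finset.prod_eq_single t]
  · simp only [hlt]
  · intro t' _ ht
    refine Finset.prod_eq_one fun j _ => if_neg fun h => hsep t t' i j ht.symm h.1.le
  · simp

end Star

section Potent

/-- Upper triangular matrices form the incidence algebra of a chain. -/
lemma card_potent_upperTriangular {K : Type*} [Field K] (n k : ℕ) :
    Nat.card {A : Matrix (Fin n) (Fin n) K // A ^ (k + 1) = A ∧ ∀ i j, j < i → A i j = 0}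
      = Nat.card {f : IncidenceAlgebra K (Fin n) // f ^ (k + 1) = f} := by
  let φ : IncidenceAlgebra K (Fin n) →* Matrix (Fin n) (Fin n) K :=
    { toFun := fun f => Matrix.of f
      map_one' := by ext i j; simp [Matrix.one_apply]
      map_mul' := fun f g => by
        ext i j
        rw [Matrix.mul_apply, Matrix.of_apply, IncidenceAlgebra.mul_apply]
        refine Finset.sum_subset (Finset.subset_univ _) fun t _ ht => ?_
        rw [Finset.mem_Icc, not_and_or] at ht
        obtain h | h := ht
        · simp [IncidenceAlgebra.apply_eq_zero_of_not_le h]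
        · simp [IncidenceAlgebra.apply_eq_zero_of_not_le h] }
  have hφ : Function.Injective φ := fun f g h => DFunLike.coe_injective h
  refine Nat.card_congr
    { toFun := fun A => ⟨⟨A.1, fun i j h => A.2.2 i j (not_le.1 h)⟩, hφ ?_⟩
      invFun := fun f => ⟨φ f.1, by rw [← map_pow, f.2], fun i j h =>
        IncidenceAlgebra.apply_eq_zero_of_not_le (not_le.2 h) f.1⟩
      left_inv := fun _ => rfl
      right_inv := fun _ => rfl }
  rw [map_pow]
  exact A.2.1

variable {K : Type*} [Field K] [Fintype K] [DecidableEq K]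

/-- The number of `(k + 1)`-potent elements of the incidence algebra of a star poset. -/
lemma card_potent_star {q k s r : ℕ} {m : Fin r → ℕ} (hq : Fintype.card K = q) (hk : 1 ≤ k)
    (hk' : (k : K) ≠ 0) (hs : (Finset.univ.filter (fun x : K => x ^ (k + 1) = x)).card = s)
    (b : Fin s) {X : Type*} [Fintype X] [PartialOrder X] [DecidableEq X] [LocallyFiniteOrder X]
    {x₀ : X} {z : (t : Fin r) → Fin (m t) → X} (hbot : ∀ w : X, x₀ ≤ w)
    (hchain : ∀ t i j, z t i ≤ z t j ↔ i ≤ j) (hsep : ∀ t t' i j, t ≠ t' → ¬ z t i ≤ z t' j)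
    (htop : ∀ t i, ¬ z t i ≤ x₀) (hcover : ∀ w : X, w = x₀ ∨ ∃ t i, w = z t i) :
    Nat.card {f : IncidenceAlgebra K X // f ^ (k + 1) = f}
      = s * ∏ t, ∑ v ∈ Finset.Nat.antidiagonalTuple s (m t), Nat.multinomial Finset.univ v *
          q ^ (∑ i : Fin s, ∑ j ∈ Finset.Ioi i, v i * v j) *
          q ^ (∑ j ∈ Finset.univ.filter (fun j : Fin s => j ≠ b), v j) := by
  classical
  have hS : Fintype.card {a : K // a ^ (k + 1) = a} = s := by rw [Fintype.card_subtype, hs]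
  rw [IncidenceAlgebra.card_potent hk hk', Nat.card_eq_fintype_card, hq]
  rw [sum_prod_star hbot hchain hsep htop hcover]
  simp_rw [sum_chainWeight_of_card hS _ q _ b]
  rw [Finset.sum_const, Finset.card_univ, hS, smul_eq_mul]

lemma card_potent_upperTriangular_succ {q k s : ℕ} (n : ℕ) (hq : Fintype.card K = q) (hk : 1 ≤ k)
    (hk' : (k : K) ≠ 0) (hs : (Finset.univ.filter (fun x : K => x ^ (k + 1) = x)).card = s)
    (b : Fin s) :
    Nat.card {A : Matrix (Fin (n + 1)) (Fin (n + 1)) K //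
        A ^ (k + 1) = A ∧ ∀ i j, j < i → A i j = 0}
      = s * ∑ v ∈ Finset.Nat.antidiagonalTuple s n, Nat.multinomial Finset.univ v *
          q ^ (∑ i : Fin s, ∑ j ∈ Finset.Ioi i, v i * v j) *
          q ^ (∑ j ∈ Finset.univ.filter (fun j : Fin s => j ≠ b), v j) := by
  rw [card_potent_upperTriangular, card_potent_star (r := 1) (m := fun _ => n) hq hk hk' hs b
    (x₀ := 0) (z := fun _ => Fin.succ)]
  · simp
  · exact Fin.zero_le
  · simp
  · intro t t' _ _ h
    exact absurd (Subsingleton.elim t t') h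
  · simp
  · intro w
    obtain h | ⟨i, h⟩ := Fin.eq_zero_or_eq_succ w
    · exact Or.inl h
    · exact Or.inr ⟨0, i, h⟩

end Potent


/-- Counting `(k+1)`-potent elements of the incidence algebra of the `r`-branched star poset:
a minimum `x₀` together with `r` chains `z t : Fin (m t) → X` above it, elements of distinct
chains being incomparable. Their number equals `N(m₁ + 1) · ∏_{t=2}^{r} P(m_t)`, where
`N(m₁+1)` is the number of `(m₁+1)×(m₁+1)` upper triangular `(k+1)`-potent matrices over `K`
(the first chain playing the role of the interval containing `x₀`), and
`P(c) = ∑_{c₁+⋯+c_s = c} (c!/(c₁!⋯c_s!)) · q^(∑_{i<j} c_i c_j) · q^(c₂+⋯+c_s)`. -/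
theorem stmt_13 {K : Type*} [Field K] [Fintype K] [DecidableEq K] (q k s r : ℕ)
    (m : Fin r → ℕ)
    (hq : Fintype.card K = q) (hk : 1 ≤ k)
    (hchar_k : (k : K) ≠ 0) (hchar_k1 : ((k + 1 : ℕ) : K) ≠ 0)
    (hs : (Finset.univ.filter (fun x : K => x ^ (k + 1) = x)).card = s) (hs0 : 0 < s)
    (hr : 0 < r)
    (X : Type*) [Fintype X] [PartialOrder X] [DecidableEq X] [LocallyFiniteOrder X]
    (x₀ : X) (z : (t : Fin r) → Fin (m t) → X)
    (hbot : ∀ w : X, x₀ ≤ w)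
    (hchain : ∀ t i j, z t i ≤ z t j ↔ i ≤ j)
    (hsep : ∀ t t' i j, t ≠ t' → ¬ z t i ≤ z t' j)
    (htop : ∀ t i, ¬ z t i ≤ x₀)
    (hinj : ∀ t, Function.Injective (z t))
    (hcover : ∀ w : X, w = x₀ ∨ ∃ t i, w = z t i) :
    Nat.card {f : IncidenceAlgebra K X // f ^ (k + 1) = f}
      = Nat.card {A : Matrix (Fin (m ⟨0, hr⟩ + 1)) (Fin (m ⟨0, hr⟩ + 1)) K //
            A ^ (k + 1) = A ∧ ∀ i j, j < i → A i j = 0}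
        * ∏ t ∈ Finset.univ.filter (fun t : Fin r => t ≠ ⟨0, hr⟩),
            ∑ v ∈ Finset.Nat.antidiagonalTuple s (m t),
              Nat.multinomial Finset.univ v *
                q ^ (∑ i : Fin s, ∑ j ∈ Finset.Ioi i, v i * v j) *
                q ^ (∑ j ∈ Finset.univ.filter (fun j : Fin s => j ≠ ⟨0, hs0⟩), v j) := by
  rw [card_potent_star hq hk hchar_k hs ⟨0, hs0⟩ hbot hchain hsep htop hcover,
    card_potent_upperTriangular_succ _ hq hk hchar_k hs ⟨0, hs0⟩, mul_assoc,
    ← Finset.mul_prod_erase Finset.univ _ (Finset.mem_univ (⟨0, hr⟩ : Fin r)),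
    Finset.filter_ne' _ (⟨0, hr⟩ : Fin r)]
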